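/- For every integer k ≥ 1, GR_k(P_7) = 2k + 5. -/

import Mathlib

/-!
The lower bound comes from a complete graph on six vertices in one color, to which two vertices are
added for every further color, all edges from them to earlier vertices getting that color.

For the upper bound, a weighted statement is proved by induction on the vertex set: if color `i` has
weight `w i ≤ m ≤ 2`, then every Gallai coloring on at least `∑ w i + m + 3` vertices contains, for
some `i`, a path of color `i` on `2 w i + 3` vertices. With all weights equal to `2` this is the bound
`2k + 5`. The weights make modules (sets `X` such that every outside vertex sends a single color to
`X`) usable: if at most `w i` outside vertices send color `i` to `X`, for each `i`, then subtracting
these numbers from the weights keeps the hypothesis true on `X`, and the path found in `X` is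
lengthened by alternating between the outside vertices and unused vertices of `X`
(`MinimalBad.module`). In a minimal counterexample, every proper module therefore has more than `w i`
outside neighbors in some color `i`, which forces the module to be small.

Gallai's structure theorem (`exists_not_linked`) provides colors `r, b` such that the edges of all
other colors form a disconnected graph. Its components are modules, and in a minimal counterexample
they have at most `w r` or `w b`, hence at most two, vertices (`MinimalBad.class_card`). So the
coloring uses only `r` and `b` up to a matching of twin pairs, and `two_color` finishes the proof: for
a longest red path, outside vertices are joined in blue to both its ends and, among any two
consecutive inner vertices, to at least one in a color other than red, which builds a long blue path.
-/

/-- A Gallai coloring: an edge coloring of the complete graph on `Fin N` with colors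
from `Fin k` containing no rainbow triangle. -/
def IsGallai {N k : ℕ} (c : Sym2 (Fin N) → Fin k) : Prop :=
  ∀ x y z : Fin N, x ≠ y → y ≠ z → x ≠ z →
    c s(x, y) = c s(y, z) ∨ c s(y, z) = c s(x, z) ∨ c s(x, y) = c s(x, z)

/-- The coloring `c` of the complete graph on `Fin N` contains a copy of the graph `H`
all of whose edges have color `i`. -/
def HasMonoCopy {N k V : ℕ} (c : Sym2 (Fin N) → Fin k)
    (H : SimpleGraph (Fin V)) (i : Fin k) : Prop :=
  ∃ f : Fin V → Fin N, Function.Injective f ∧ ∀ u v, H.Adj u v → c s(f u, f v) = i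

/-- Every Gallai k-coloring of the complete graph on `N` vertices contains a
monochromatic copy of `(H i)` in color `i` for some color `i`. -/
def GallaiRamseyProp {k : ℕ} (H : Fin k → Σ V : ℕ, SimpleGraph (Fin V)) (N : ℕ) : Prop :=
  ∀ c : Sym2 (Fin N) → Fin k, IsGallai c → ∃ i : Fin k, HasMonoCopy c (H i).2 i

/-- The matching of size `n`: the graph on `2n` vertices consisting of `n` pairwise
vertex-disjoint edges. -/
def matchingGraph (n : ℕ) : SimpleGraph (Fin (2 * n)) :=
  SimpleGraph.fromRel (fun u v => (u : ℕ) / 2 = (v : ℕ) / 2)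

/-! ### Gallai's structure theorem -/

section
variable {V K : Type*}

/-- `c` has no rainbow triangle inside `S`. Colorings are functions of ordered pairs here; symmetry is
a separate hypothesis and the values on the diagonal are irrelevant. -/
def GallaiOn (c : V → V → K) (S : Finset V) : Prop :=
  ∀ x ∈ S, ∀ y ∈ S, ∀ z ∈ S, x ≠ y → y ≠ z → x ≠ z →
    c x y = c y z ∨ c y z = c x z ∨ c x y = c x z

/-- `uv` is an edge inside `S` whose color is neither `r` nor `b`. -/
def OtherEdge (c : V → V → K) (S : Finset V) (r b : K) (u v : V) : Prop :=
  u ∈ S ∧ v ∈ S ∧ u ≠ v ∧ c u v ≠ r ∧ c u v ≠ b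

/-- `u` and `v` lie in the same connected component of the graph on `S` formed by the edges whose color
is neither `r` nor `b`. -/
def Linked (c : V → V → K) (S : Finset V) (r b : K) : V → V → Prop :=
  Relation.ReflTransGen (OtherEdge c S r b)

variable {c : V → V → K} {S : Finset V} {r b : K}

theorem Linked.symm (hc : ∀ u v, c u v = c v u) {u v : V}
    (h : Linked c S r b u v) : Linked c S r b v u := by
  induction h with
  | refl => exact .refl
  | @tail x y _ hxy ih =>
    obtain ⟨hx, hy, hne, h1, h2⟩ := hxy
    exact .head ⟨hy, hx, hne.symm, hc x y ▸ h1, hc x y ▸ h2⟩ ih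

theorem Linked.mem {u v : V} (h : Linked c S r b u v) (hu : u ∈ S) : v ∈ S := by
  induction h with
  | refl => exact hu
  | tail _ h _ => exact h.2.1

theorem color_of_not_linked {u v : V} (hu : u ∈ S) (hv : v ∈ S)
    (h : ¬ Linked c S r b u v) : c u v = r ∨ c u v = b := by
  by_contra! hcon
  refine h (Relation.ReflTransGen.single ⟨hu, hv, ?_, hcon.1, hcon.2⟩)
  rintro rfl
  exact h .refl

/-- Every component of the graph of the other colors is a module: a vertex outside it sends a single
color to it. Along an edge `xy` of another color this is the Gallai condition on `x, y, v`. -/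
theorem color_eq_of_linked (hG : GallaiOn c S) {u u' v : V}
    (hu : u ∈ S) (hv : v ∈ S) (huu : Linked c S r b u u') (huv : ¬ Linked c S r b u v) :
    c u v = c u' v := by
  induction huu with
  | refl => rfl
  | @tail x y hux hxy ih =>
    have hx := Linked.mem hux hu
    have hy := hxy.2.1
    have hxv : ¬ Linked c S r b x v := fun h => huv (hux.trans h)
    have hyv : ¬ Linked c S r b y v := fun h => huv ((hux.tail hxy).trans h)
    have h1 := color_of_not_linked hx hv hxv
    have h2 := color_of_not_linked hy hv hyv
    have hxv' : x ≠ v := by rintro rfl; exact hxv .refl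
    have hyv' : y ≠ v := by rintro rfl; exact hyv .refl
    obtain ⟨-, -, hne, h3, h4⟩ := hxy
    rw [ih]
    rcases hG x hx y hy v hv hne hyv' hxv' with h | h | h <;> grind

/-- A link in `insert v S` starting in `S` either stays in `S` or reaches a neighbor of `v` first. -/
theorem linked_insert [DecidableEq V] {v u x : V}
    (hu : u ∈ S) (h : Linked c (insert v S) r b u x) :
    (x ∈ S ∧ Linked c S r b u x) ∨ ∃ y ∈ S, Linked c S r b u y ∧ c y v ≠ r ∧ c y v ≠ b := by
  induction h with
  | refl => exact .inl ⟨hu, .refl⟩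
  | @tail x y _ hxy ih =>
    rcases ih with ⟨hx, h⟩ | h
    · obtain ⟨-, hy, hne, h1, h2⟩ := hxy
      rcases Finset.mem_insert.1 hy with rfl | hy
      · exact .inr ⟨x, hx, h, h1, h2⟩
      · exact .inl ⟨hy, h.tail ⟨hx, hy, hne, h1, h2⟩⟩
    · exact .inr h

/-- If all edges at `v` have color `r` or `b`, then `v` is a component by itself. -/
theorem not_linked_star [DecidableEq V] {v u : V} (huv : v ≠ u)
    (h : ∀ x ∈ S, c v x = r ∨ c v x = b) : ¬ Linked c (insert v S) r b v u := by
  intro hl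
  rcases Relation.ReflTransGen.cases_head hl with h0 | ⟨x, ⟨-, hx, hne, h1, h2⟩, -⟩
  · exact huv h0
  · rcases Finset.mem_insert.1 hx with rfl | hx
    · exact hne rfl
    · exact (h x hx).elim h1 h2

/-- Gallai's structure theorem: for suitable colors `r` and `b`, the graph of the remaining colors is
disconnected. When a vertex `v` is added and connects all components for the old pair `r, b`, all of
its edges of another color share one color `g`; then one of the pairs `b, g` and `r, g` isolates `v`. -/
theorem exists_not_linked [DecidableEq V] (hc : ∀ u v, c u v = c v u) (S : Finset V)
    (hG : GallaiOn c S) (h2 : 2 ≤ S.card) :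
    ∃ r b, ∃ u ∈ S, ∃ v ∈ S, ¬ Linked c S r b u v := by
  induction S using Finset.induction_on with
  | empty => simp at h2
  | @insert v S hv ih =>
    have hGS : GallaiOn c S := fun x hx y hy z hz =>
      hG x (Finset.mem_insert_of_mem hx) y (Finset.mem_insert_of_mem hy)
        z (Finset.mem_insert_of_mem hz)
    rw [Finset.card_insert_of_notMem hv] at h2
    have hne : ∀ x ∈ S, v ≠ x := by rintro x hx rfl; exact hv hx
    obtain ⟨w, hw⟩ : S.Nonempty := Finset.card_pos.1 (by omega)
    by_cases h1 : S.card = 1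
    · obtain ⟨a, rfl⟩ := Finset.card_eq_one.1 h1
      exact ⟨c v a, c v a, v, by simp, a, by simp, not_linked_star (hne a (by simp)) (by simp)⟩
    obtain ⟨r, b, s, hs, t, ht, hst⟩ := ih hGS (by omega)
    by_contra! hcon
    -- every class of `S` sends to `v` an edge whose color is neither `r` nor `b`
    have key : ∀ u ∈ S, ∃ y ∈ S, Linked c S r b u y ∧ c y v ≠ r ∧ c y v ≠ b := by
      intro u hu
      rcases linked_insert hu
        (hcon r b u (Finset.mem_insert_of_mem hu) v (Finset.mem_insert_self v S)) with h | h
      · exact absurd h.1 hv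
      · exact h
    -- the Gallai condition on a triangle with apex `v`
    have tri : ∀ x ∈ S, ∀ y ∈ S, x ≠ y → c x y = c y v ∨ c y v = c x v ∨ c x y = c x v :=
      fun x hx y hy hxy => hG x (Finset.mem_insert_of_mem hx) y (Finset.mem_insert_of_mem hy) v
        (Finset.mem_insert_self v S) hxy (hne y hy).symm (hne x hx).symm
    have nl : ∀ x y, ¬ Linked c S r b x y → x ≠ y := by
      rintro x y h rfl
      exact h .refl
    obtain ⟨y₁, hy₁, hsy, h11, h12⟩ := key s hs
    obtain ⟨y₂, hy₂, hty, h21, h22⟩ := key t ht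
    have same : ∀ x ∈ S, ∀ y ∈ S, ¬ Linked c S r b x y → c x v ≠ r → c x v ≠ b →
        c y v ≠ r → c y v ≠ b → c x v = c y v := by
      intro x hx y hy hxy a1 a2 a3 a4
      have := color_of_not_linked hx hy hxy
      have := tri x hx y hy (nl x y hxy)
      grind
    have hy12 : ¬ Linked c S r b y₁ y₂ :=
      fun h => hst ((hsy.trans h).trans (hty.symm hc))
    have far : ∀ x, ∃ y ∈ S, ¬ Linked c S r b x y := by
      intro x
      by_cases h : Linked c S r b x y₁
      · exact ⟨y₂, hy₂, fun h' => hy12 ((h.symm hc).trans h')⟩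
      · exact ⟨y₁, hy₁, h⟩
    have hg12 := same y₁ hy₁ y₂ hy₂ hy12 h11 h12 h21 h22
    set g := c y₁ v with hg
    have all : ∀ y ∈ S, c y v ≠ r → c y v ≠ b → c y v = g := by
      intro y hy a1 a2
      by_cases h : Linked c S r b y₁ y
      · rw [hg12]
        exact same y hy y₂ hy₂ (fun h' => hy12 (h.trans h')) a1 a2 h21 h22
      · exact (same y₁ hy₁ y hy h h11 h12 a1 a2).symm
    -- otherwise `v` would be isolated with respect to the two colors `i` and `g`
    have ex : ∀ i, ∃ x ∈ S, c x v ≠ i ∧ c x v ≠ g := by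
      intro i
      by_contra! h
      refine not_linked_star (r := i) (b := g) (hne w hw) ?_
        (hcon i g v (Finset.mem_insert_self v S) w (Finset.mem_insert_of_mem hw))
      intro x hx
      rw [hc v x]
      by_cases h' : c x v = i
      · exact .inl h'
      · exact .inr (h x hx h')
    obtain ⟨x₁, hx₁, e1, e2⟩ := ex b
    obtain ⟨x₂, hx₂, e3, e4⟩ := ex r
    have f1 : c x₁ v = r := by
      by_contra h
      exact e2 (all x₁ hx₁ h e1)
    have f2 : c x₂ v = b := by
      by_contra h
      exact e4 (all x₂ hx₂ e3 h)
    -- a class containing a non-`g` neighbor of `v` sees every other class in that color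
    have out : ∀ x ∈ S, ∀ y ∈ S, ¬ Linked c S r b x y → (c x v = r ∨ c x v = b) →
        c x y = c x v := by
      intro x hx y hy hxy hxv
      obtain ⟨y', hy', hl, a1, a2⟩ := key y hy
      have hxy' : ¬ Linked c S r b x y' := fun h => hxy (h.trans (hl.symm hc))
      have e : c y x = c y' x := color_eq_of_linked hGS hy hx hl (fun h => hxy (h.symm hc))
      have := tri x hx y' hy' (nl _ _ hxy')
      have := color_of_not_linked hx hy' hxy'
      have := all y' hy' a1 a2
      grind
    by_cases hl : Linked c S r b x₁ x₂
    · obtain ⟨y, hy, hny⟩ := far x₁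
      have a1 := out x₁ hx₁ y hy hny (.inl f1)
      have a2 := out x₂ hx₂ y hy (fun h => hny (hl.trans h)) (.inr f2)
      have a3 := color_eq_of_linked hGS hx₁ hy hl hny
      grind
    · have a1 := out x₁ hx₁ x₂ hx₂ hl (.inl f1)
      have a2 := out x₂ hx₂ x₁ hx₁ (fun h => hl (h.symm hc)) (.inr f2)
      grind


/-! ### Monochromatic paths and twin colorings -/

/-- `l` lists the vertices, in order, of a path in `S` all of whose edges have color `i`. Its length is
the number of vertices. -/
def MonoPath (c : V → V → K) (S : Finset V) (i : K) (l : List V) : Prop :=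
  l.Nodup ∧ (∀ x ∈ l, x ∈ S) ∧ l.IsChain (fun u v => c u v = i)

/-- No path of color `i` in `S` has exactly `n` vertices. -/
def NoPath (c : V → V → K) (S : Finset V) (i : K) (n : ℕ) : Prop :=
  ∀ l, MonoPath c S i l → l.length ≠ n

/-- The edges of `S` whose color is neither `r` (red) nor `b` (blue) form a matching, and the two ends
of such an edge are twins: every further vertex sends the same color to both. -/
structure TwinColoring (c : V → V → K) (S : Finset V) (r b : K) : Prop where
  symm : ∀ u v, c u v = c v u
  ne : r ≠ b
  matching : ∀ u ∈ S, ∀ v ∈ S, ∀ w ∈ S, v ≠ u → w ≠ u → c u v ≠ r → c u v ≠ b →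
    c u w ≠ r → c u w ≠ b → v = w
  twin : ∀ u ∈ S, ∀ v ∈ S, ∀ x ∈ S, u ≠ v → u ≠ x → v ≠ x → c u v ≠ r → c u v ≠ b →
    c u x = c v x


theorem TwinColoring.swap (h : TwinColoring c S r b) : TwinColoring c S b r where
  symm := h.symm
  ne := h.ne.symm
  matching u hu v hv w hw h1 h2 h3 h4 h5 h6 := h.matching u hu v hv w hw h1 h2 h4 h3 h6 h5
  twin u hu v hv x hx h1 h2 h3 h4 h5 := h.twin u hu v hv x hx h1 h2 h3 h5 h4

theorem MonoPath.reverse (hc : ∀ u v, c u v = c v u) {i : K} {l : List V}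
    (h : MonoPath c S i l) : MonoPath c S i l.reverse := by
  refine ⟨List.nodup_reverse.2 h.1, fun x hx => h.2.1 x (List.mem_reverse.1 hx), ?_⟩
  rw [List.isChain_reverse]
  exact h.2.2.imp fun a b hab => by rw [hc]; exact hab

/-- Between a length that occurs and a larger one that does not, there is a path whose length cannot be
increased by one. It serves as a longest path. -/
theorem exists_jump {i : K} {m n : ℕ} (hmn : m ≤ n) {l : List V} (hl : MonoPath c S i l)
    (hlm : l.length = m) (hn : NoPath c S i n) :
    ∃ l', MonoPath c S i l' ∧ m ≤ l'.length ∧ l'.length < n ∧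
      NoPath c S i (l'.length + 1) := by
  induction n, hmn using Nat.le_induction with
  | base => exact absurd hlm (hn l hl)
  | succ n hmn ih =>
    by_cases h : NoPath c S i n
    · obtain ⟨l', h1, h2, h3, h4⟩ := ih h
      exact ⟨l', h1, h2, by omega, h4⟩
    · simp only [NoPath, not_forall, not_not] at h
      obtain ⟨l', h1, h2⟩ := h
      exact ⟨l', h1, by omega, by omega, by rw [h2]; exact hn⟩

/-- Splitting off both ends of a path on at least two vertices. -/
theorem exists_ends {l : List V} (h : 2 ≤ l.length) : ∃ p t q, l = p :: (t ++ [q]) := by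
  match l, h with
  | p :: a :: s, _ =>
    obtain ⟨t, q, h⟩ := List.eq_nil_or_concat (a :: s) |>.resolve_left (by simp)
    exact ⟨p, t, q, by rw [h, List.concat_eq_append]⟩

/-- An outside vertex has no edge of color `i` to the ends of a path that cannot be lengthened. -/
theorem ends_ne {i : K} (hc : ∀ u v, c u v = c v u) {p q : V} {t : List V}
    (hl : MonoPath c S i (p :: (t ++ [q])))
    (hno : NoPath c S i ((p :: (t ++ [q])).length + 1)) {x : V} (hx : x ∈ S)
    (hxl : x ∉ p :: (t ++ [q])) : c x p ≠ i ∧ c x q ≠ i := by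
  constructor
  · intro h
    refine hno (x :: p :: (t ++ [q])) ⟨List.nodup_cons.2 ⟨hxl, hl.1⟩, ?_, ?_⟩ (by simp)
    · intro y hy
      rcases List.mem_cons.1 hy with rfl | hy
      · exact hx
      · exact hl.2.1 y hy
    · exact List.isChain_cons_cons.2 ⟨h, hl.2.2⟩
  · intro h
    refine hno ((p :: (t ++ [q])) ++ [x]) ⟨?_, ?_, ?_⟩ (by simp)
    · rw [List.nodup_append]
      refine ⟨hl.1, by simp, ?_⟩
      rintro a ha d hd rfl
      exact hxl (List.mem_singleton.1 hd ▸ ha)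
    · intro y hy
      rcases List.mem_append.1 hy with hy | hy
      · exact hl.2.1 y hy
      · exact List.mem_singleton.1 hy ▸ hx
    · rw [List.isChain_append]
      refine ⟨hl.2.2, by simp, ?_⟩
      intro a ha d hd
      rw [← List.cons_append, List.getLast?_concat, Option.mem_some_iff] at ha
      rw [List.head?_cons, Option.mem_some_iff] at hd
      rw [← ha, ← hd, hc]
      exact h

variable [DecidableEq V]

/-! ### Blue paths around a longest red path -/

/-- Around the ends `p, q` of a red path that cannot be lengthened, with three vertices outside, there is
a blue path `x p y q z` with `x, y, z` outside. Each end has at most one outside twin, so the three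
outer vertices can be placed to avoid all twin pairs. -/
theorem blue_five (h : TwinColoring c S r b) {p q : V} {t : List V}
    (hl : MonoPath c S r (p :: (t ++ [q])))
    (hno : NoPath c S r ((p :: (t ++ [q])).length + 1))
    (hcard : (p :: (t ++ [q])).length + 3 ≤ S.card) :
    ∃ x ∈ S, ∃ y ∈ S, ∃ z ∈ S, x ∉ p :: (t ++ [q]) ∧ y ∉ p :: (t ++ [q]) ∧
      z ∉ p :: (t ++ [q]) ∧ x ≠ y ∧ x ≠ z ∧ y ≠ z ∧
      c x p = b ∧ c y p = b ∧ c y q = b ∧ c z q = b := by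
  set l := p :: (t ++ [q]) with hldef
  have hpl : p ∈ l := by simp [l]
  have hql : q ∈ l := by simp [l]
  have hp : p ∈ S := hl.2.1 p hpl
  have hq : q ∈ S := hl.2.1 q hql
  have hpq : p ≠ q := by
    rintro rfl
    have := hl.1
    simp [l] at this
  have hO : 2 < (S \ l.toFinset).card := by
    have h1 := Finset.le_card_sdiff l.toFinset S
    have h2 := List.toFinset_card_le l
    omega
  obtain ⟨x, y, z, hx, hy, hz, hxy, hxz, hyz⟩ := Finset.two_lt_card_iff.1 hO
  simp only [Finset.mem_sdiff, List.mem_toFinset] at hx hy hz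
  have ex := ends_ne h.symm hl hno hx.1 hx.2
  have ey := ends_ne h.symm hl hno hy.1 hy.2
  have ez := ends_ne h.symm hl hno hz.1 hz.2
  -- each end of the path has at most one outside twin, and no vertex is a twin of both ends
  have mp : ∀ u ∈ S, ∀ v ∈ S, u ∉ l → v ∉ l → u ≠ v → c u p ≠ r → c v p ≠ r →
      c u p = b ∨ c v p = b := by
    intro u hu v hv hul hvl huv a1 a2
    have := h.matching p hp u hu v hv
    grind [h.symm]
  have mq : ∀ u ∈ S, ∀ v ∈ S, u ∉ l → v ∉ l → u ≠ v → c u q ≠ r → c v q ≠ r →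
      c u q = b ∨ c v q = b := by
    intro u hu v hv hul hvl huv a1 a2
    have := h.matching q hq u hu v hv
    grind [h.symm]
  have mpq : ∀ u ∈ S, u ∉ l → c u p ≠ r → c u q ≠ r → c u p = b ∨ c u q = b := by
    intro u hu hul a1 a2
    have := h.matching u hu p hp q hq
    grind
  have key : ∃ x' ∈ [x, y, z], ∃ y' ∈ [x, y, z], ∃ z' ∈ [x, y, z], x' ≠ y' ∧ x' ≠ z' ∧ y' ≠ z' ∧
      c x' p = b ∧ c y' p = b ∧ c y' q = b ∧ c z' q = b := by
    have a1 := mp x hx.1 y hy.1 hx.2 hy.2 hxy ex.1 ey.1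
    have a2 := mp x hx.1 z hz.1 hx.2 hz.2 hxz ex.1 ez.1
    have a3 := mp y hy.1 z hz.1 hy.2 hz.2 hyz ey.1 ez.1
    have b1 := mq x hx.1 y hy.1 hx.2 hy.2 hxy ex.2 ey.2
    have b2 := mq x hx.1 z hz.1 hx.2 hz.2 hxz ex.2 ez.2
    have b3 := mq y hy.1 z hz.1 hy.2 hz.2 hyz ey.2 ez.2
    have c1 := mpq x hx.1 hx.2 ex.1 ex.2
    have c2 := mpq y hy.1 hy.2 ey.1 ey.2
    have c3 := mpq z hz.1 hz.2 ez.1 ez.2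
    simp only [List.mem_cons, List.not_mem_nil, or_false, exists_eq_or_imp, exists_eq_left]
    grind
  obtain ⟨x', hx', y', hy', z', hz', hk⟩ := key
  have hmem : ∀ u ∈ [x, y, z], u ∈ S ∧ u ∉ l := by simp [hx, hy, hz]
  exact ⟨x', (hmem x' hx').1, y', (hmem y' hy').1, z', (hmem z' hz').1,
    (hmem x' hx').2, (hmem y' hy').2, (hmem z' hz').2, hk⟩

/-- The case in which blue paths on three vertices are forbidden: one outside vertex suffices. -/
theorem blue_three (h : TwinColoring c S r b) {l : List V} (hl : MonoPath c S r l)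
    (hl2 : 2 ≤ l.length) (hno : NoPath c S r (l.length + 1)) (hcard : l.length + 1 ≤ S.card) :
    ∃ l', MonoPath c S b l' ∧ l'.length = 3 := by
  obtain ⟨p, t, q, rfl⟩ := exists_ends hl2
  have hpl : p ∈ p :: (t ++ [q]) := by simp
  have hql : q ∈ p :: (t ++ [q]) := by simp
  have hp : p ∈ S := hl.2.1 p hpl
  have hq : q ∈ S := hl.2.1 q hql
  have hpq : p ≠ q := by
    rintro rfl
    have := hl.1
    simp at this
  have hO : 0 < (S \ (p :: (t ++ [q])).toFinset).card := by
    have h1 := Finset.le_card_sdiff (p :: (t ++ [q])).toFinset S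
    have h2 := List.toFinset_card_le (p :: (t ++ [q]))
    omega
  obtain ⟨x, hx⟩ := Finset.card_pos.1 hO
  rw [Finset.mem_sdiff, List.mem_toFinset] at hx
  obtain ⟨e1, e2⟩ := ends_ne h.symm hl hno hx.1 hx.2
  have hxp : x ≠ p := by rintro rfl; exact hx.2 hpl
  have hxq : x ≠ q := by rintro rfl; exact hx.2 hql
  have hsy := h.symm
  by_cases f1 : c x p = b
  · by_cases f2 : c x q = b
    · refine ⟨[p, x, q], ⟨?_, ?_, ?_⟩, rfl⟩ <;> simp <;> grind
    · have := h.twin x hx.1 q hq p hp hxq hxp hpq.symm e2 f2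
      refine ⟨[x, p, q], ⟨?_, ?_, ?_⟩, rfl⟩ <;> simp <;> grind
  · have f2 := h.matching x hx.1 p hp q hq hxp.symm hxq.symm e1 f1 e2
    have := h.twin x hx.1 p hp q hq hxp hxq hpq e1 f1
    refine ⟨[x, q, p], ⟨?_, ?_, ?_⟩, rfl⟩ <;> simp <;> grind

omit [DecidableEq V] in
/-- If an end `p` of a red path has a twin `x` outside and `y` is another outside vertex, then
`p y x q` is a blue four-cycle (closed by `q p`). Since `x v₂ p v₃ … q` would be a longer red path,
the edge `p v₃` is blue and extends the cycle to a blue path on five vertices. -/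
theorem blue_five_of_twin (h : TwinColoring c S r b) {p v₂ v₃ q x y : V} {t : List V}
    (hl : MonoPath c S r (p :: v₂ :: v₃ :: (t ++ [q])))
    (hno : NoPath c S r (t.length + 5))
    (hx : x ∈ S) (hxl : x ∉ p :: v₂ :: v₃ :: (t ++ [q]))
    (hy : y ∈ S) (hyl : y ∉ p :: v₂ :: v₃ :: (t ++ [q])) (hxy : x ≠ y)
    (hxp : c x p ≠ b) :
    ∃ l', MonoPath c S b l' ∧ l'.length = 5 := by
  have hno' : NoPath c S r ((p :: ((v₂ :: v₃ :: t) ++ [q])).length + 1) := by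
    have e : (p :: ((v₂ :: v₃ :: t) ++ [q])).length + 1 = t.length + 5 := by simp
    rw [e]
    exact hno
  have ex := ends_ne (t := v₂ :: v₃ :: t) h.symm hl hno' hx hxl
  have ey := ends_ne (t := v₂ :: v₃ :: t) h.symm hl hno' hy hyl
  obtain ⟨hn, hm, hch⟩ := hl
  have hsy := h.symm
  simp only [List.mem_cons, List.mem_append, List.not_mem_nil, or_false, not_or] at hxl hyl
  simp only [List.mem_cons, List.mem_append, List.not_mem_nil, or_false] at hm
  have hp : p ∈ S := hm p (by simp)
  have h2 : v₂ ∈ S := hm v₂ (by simp)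
  have h3 : v₃ ∈ S := hm v₃ (by simp)
  have hq : q ∈ S := hm q (by simp)
  simp only [List.nodup_cons, List.mem_cons, List.mem_append, List.not_mem_nil, or_false,
    not_or] at hn
  rw [List.isChain_cons_cons, List.isChain_cons_cons] at hch
  have tw : ∀ u ∈ S, x ≠ u → p ≠ u → c x u = c p u := fun u hu h1 h2 =>
    h.twin x hx p hp u hu hxl.1 h1 h2 ex.1 hxp
  have g1 : c x q ≠ r ∧ c x q = b := by
    have := h.matching x hx p hp q hq
    grind
  have g2 : c p q = b := by grind
  have g3 : c y p = b := by
    have := h.matching p hp x hx y hy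
    grind
  have g4 : c x y = b := by grind
  by_cases hr : c p v₃ = r
  · exfalso
    refine hno (x :: v₂ :: p :: v₃ :: (t ++ [q])) ⟨?_, ?_, ?_⟩ (by simp)
    · simp only [List.nodup_cons, List.mem_cons, List.mem_append, List.not_mem_nil, or_false,
        not_or]
      grind
    · simp only [List.mem_cons, List.mem_append, List.not_mem_nil, or_false]
      grind
    · simp only [List.isChain_cons_cons]
      grind
  · have g5 : c p v₃ = b := by
      have := h.matching p hp x hx v₃ h3
      grind
    refine ⟨[v₃, p, y, x, q], ⟨?_, ?_, ?_⟩, rfl⟩ <;> simp <;> grind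

theorem exists_two {l : List V} (h : l.length + 2 ≤ S.card) :
    ∃ x ∈ S, ∃ y ∈ S, x ∉ l ∧ y ∉ l ∧ x ≠ y := by
  have hO : 1 < (S \ l.toFinset).card := by
    have h1 := Finset.le_card_sdiff l.toFinset S
    have h2 := List.toFinset_card_le l
    omega
  obtain ⟨x, hx, y, hy, hxy⟩ := Finset.one_lt_card.1 hO
  simp only [Finset.mem_sdiff, List.mem_toFinset] at hx hy
  exact ⟨x, hx.1, y, hy.1, hx.2, hy.2, hxy⟩

omit [DecidableEq V] in
/-- An outside vertex with a non-red edge to the end `p` is not a twin of the neighbor `v₂` of `p`,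
because a twin of `v₂` is joined to `p` in red. -/
theorem second_not_twin (h : TwinColoring c S r b) {p v₂ x : V} (hp : p ∈ S) (h2 : v₂ ∈ S)
    (hx : x ∈ S) (hpv : p ≠ v₂) (hxp : x ≠ p) (hx2 : x ≠ v₂) (e : c p v₂ = r) (ex : c x p ≠ r)
    (hr : c x v₂ ≠ r) : c x v₂ = b := by
  by_contra hb
  have := h.twin x hx v₂ h2 p hp hx2 hxp hpv.symm hr hb
  have := h.symm p v₂
  grind

omit [DecidableEq V] in
/-- An outside vertex joined in red to two consecutive vertices could be inserted between them. -/
theorem not_both_red (hc : ∀ u v, c u v = c v u) {l₁ l₂ : List V} {u v x : V}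
    (hl : MonoPath c S r (l₁ ++ u :: v :: l₂))
    (hno : NoPath c S r ((l₁ ++ u :: v :: l₂).length + 1))
    (hx : x ∈ S) (hxl : x ∉ l₁ ++ u :: v :: l₂) (hu : c x u = r) : c x v ≠ r := by
  intro hv
  obtain ⟨hn, hm, hch⟩ := hl
  have perm : (l₁ ++ u :: x :: v :: l₂).Perm (x :: (l₁ ++ u :: v :: l₂)) := by
    have := List.perm_middle (a := x) (l₁ := l₁ ++ [u]) (l₂ := v :: l₂)
    simpa using this
  refine hno (l₁ ++ u :: x :: v :: l₂) ⟨?_, ?_, ?_⟩ ?_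
  · rw [perm.nodup_iff]
    exact List.nodup_cons.2 ⟨hxl, hn⟩
  · intro y hy
    rcases List.mem_cons.1 (perm.mem_iff.1 hy) with rfl | hy
    · exact hx
    · exact hm y hy
  · rw [List.isChain_append] at hch ⊢
    refine ⟨hch.1, ?_, ?_⟩
    · have := hch.2.1
      rw [List.isChain_cons_cons] at this ⊢
      rw [List.isChain_cons_cons]
      exact ⟨by rw [hc]; exact hu, hv, this.2⟩
    · simpa using hch.2.2
  · rw [perm.length_eq]
    simp

theorem blue_five_of_four (h : TwinColoring c S r b) {v₁ v₂ v₃ v₄ : V}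
    (hl : MonoPath c S r [v₁, v₂, v₃, v₄]) (hno : NoPath c S r 5) (hcard : 6 ≤ S.card) :
    ∃ l', MonoPath c S b l' ∧ l'.length = 5 := by
  obtain ⟨x, hx, y, hy, hxl, hyl, hxy⟩ := exists_two (l := [v₁, v₂, v₃, v₄]) hcard
  have hl' : MonoPath c S r [v₄, v₃, v₂, v₁] := hl.reverse h.symm
  have hxl' : x ∉ [v₄, v₃, v₂, v₁] := by simp at hxl ⊢; grind
  have hyl' : y ∉ [v₄, v₃, v₂, v₁] := by simp at hyl ⊢; grind
  by_cases a1 : c x v₁ = b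
  swap
  · exact blue_five_of_twin (t := []) h hl hno hx hxl hy hyl hxy a1
  by_cases a2 : c y v₁ = b
  swap
  · exact blue_five_of_twin (t := []) h hl hno hy hyl hx hxl hxy.symm a2
  by_cases a3 : c x v₄ = b
  swap
  · exact blue_five_of_twin (t := []) h hl' hno hx hxl' hy hyl' hxy a3
  by_cases a4 : c y v₄ = b
  swap
  · exact blue_five_of_twin (t := []) h hl' hno hy hyl' hx hxl' hxy.symm a4
  have n1 := not_both_red (l₁ := [v₁]) (l₂ := [v₄]) h.symm hl hno hx hxl
  have n2 := not_both_red (l₁ := [v₁]) (l₂ := [v₄]) h.symm hl hno hy hyl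
  have hsy := h.symm
  have hne := h.ne
  obtain ⟨hn, hm, hch⟩ := hl
  simp only [List.mem_cons, List.not_mem_nil, or_false, not_or, forall_eq_or_imp, forall_eq,
    List.nodup_cons, List.isChain_cons_cons, not_false_eq_true, List.nodup_nil, and_true,
    List.IsChain.singleton] at hn hm hch hxl hyl
  have s1 := second_not_twin h (p := v₁) (v₂ := v₂) (x := x) (by grind) (by grind) hx (by grind)
    (by grind) (by grind) (by grind) (by grind)
  have s2 := second_not_twin h (p := v₁) (v₂ := v₂) (x := y) (by grind) (by grind) hy (by grind)
    (by grind) (by grind) (by grind) (by grind)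
  have s3 := second_not_twin h (p := v₄) (v₂ := v₃) (x := x) (by grind) (by grind) hx (by grind)
    (by grind) (by grind) (by grind) (by grind)
  have key : c x v₂ = b ∨ c x v₃ = b := by
    by_cases c x v₂ = r
    · exact .inr (s3 (n1 ‹_›))
    · exact .inl (s1 ‹_›)
  rcases key with k | k
  · refine ⟨[v₂, x, v₁, y, v₄], ⟨?_, ?_, ?_⟩, rfl⟩ <;> simp <;> grind
  · refine ⟨[v₃, x, v₁, y, v₄], ⟨?_, ?_, ?_⟩, rfl⟩ <;> simp <;> grind

theorem blue_five_of_six (h : TwinColoring c S r b) {v₁ v₂ v₃ v₄ v₅ v₆ : V}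
    (hl : MonoPath c S r [v₁, v₂, v₃, v₄, v₅, v₆]) (hno : NoPath c S r 7) (hcard : 8 ≤ S.card) :
    ∃ l', MonoPath c S b l' ∧ l'.length = 5 := by
  obtain ⟨x, hx, y, hy, hxl, hyl, hxy⟩ := exists_two (l := [v₁, v₂, v₃, v₄, v₅, v₆]) hcard
  have hl' : MonoPath c S r [v₆, v₅, v₄, v₃, v₂, v₁] := hl.reverse h.symm
  have hxl' : x ∉ [v₆, v₅, v₄, v₃, v₂, v₁] := by simp at hxl ⊢; grind
  have hyl' : y ∉ [v₆, v₅, v₄, v₃, v₂, v₁] := by simp at hyl ⊢; grind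
  by_cases a1 : c x v₁ = b
  swap
  · exact blue_five_of_twin (t := [v₄, v₅]) h hl hno hx hxl hy hyl hxy a1
  by_cases a2 : c y v₁ = b
  swap
  · exact blue_five_of_twin (t := [v₄, v₅]) h hl hno hy hyl hx hxl hxy.symm a2
  by_cases a3 : c x v₆ = b
  swap
  · exact blue_five_of_twin (t := [v₃, v₂]) h hl' hno hx hxl' hy hyl' hxy a3
  by_cases a4 : c y v₆ = b
  swap
  · exact blue_five_of_twin (t := [v₃, v₂]) h hl' hno hy hyl' hx hxl' hxy.symm a4
  have n1 := not_both_red (l₁ := [v₁]) (l₂ := [v₄, v₅, v₆]) h.symm hl hno hx hxl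
  have n2 := not_both_red (l₁ := [v₁]) (l₂ := [v₄, v₅, v₆]) h.symm hl hno hy hyl
  have hsy := h.symm
  have hne := h.ne
  obtain ⟨hn, hm, hch⟩ := hl
  simp only [List.mem_cons, List.not_mem_nil, or_false, not_or, forall_eq_or_imp, forall_eq,
    List.nodup_cons, List.isChain_cons_cons, not_false_eq_true, List.nodup_nil, and_true,
    List.IsChain.singleton] at hn hm hch hxl hyl
  have s1 := second_not_twin h (p := v₁) (v₂ := v₂) (x := x) (by grind) (by grind) hx (by grind)
    (by grind) (by grind) (by grind) (by grind)
  have s2 := second_not_twin h (p := v₁) (v₂ := v₂) (x := y) (by grind) (by grind) hy (by grind)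
    (by grind) (by grind) (by grind) (by grind)
  have key : (c x v₂ = b ∨ c x v₃ = b) ∨ (c y v₂ = b ∨ c y v₃ = b) := by
    have := h.matching v₃ (by grind) x hx y hy
    grind
  rcases key with (k | k) | (k | k)
  · refine ⟨[v₂, x, v₁, y, v₆], ⟨?_, ?_, ?_⟩, rfl⟩ <;> simp <;> grind
  · refine ⟨[v₃, x, v₁, y, v₆], ⟨?_, ?_, ?_⟩, rfl⟩ <;> simp <;> grind
  · refine ⟨[v₂, y, v₁, x, v₆], ⟨?_, ?_, ?_⟩, rfl⟩ <;> simp <;> grind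
  · refine ⟨[v₃, y, v₁, x, v₆], ⟨?_, ?_, ?_⟩, rfl⟩ <;> simp <;> grind

theorem blue_six_of_five (h : TwinColoring c S r b) {v₁ v₂ v₃ v₄ v₅ : V}
    (hl : MonoPath c S r [v₁, v₂, v₃, v₄, v₅]) (hno : NoPath c S r 6) (hcard : 8 ≤ S.card) :
    ∃ l', MonoPath c S b l' ∧ l'.length = 6 := by
  obtain ⟨x, hx, y, hy, z, hz, hxl, hyl, hzl, hxy, hxz, hyz, a1, a2, a3, a4⟩ :=
    blue_five (p := v₁) (q := v₅) (t := [v₂, v₃, v₄]) h hl hno hcard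
  have e1 := ends_ne (p := v₁) (q := v₅) (t := [v₂, v₃, v₄]) h.symm hl hno hx hxl
  have e2 := ends_ne (p := v₁) (q := v₅) (t := [v₂, v₃, v₄]) h.symm hl hno hz hzl
  have n1 := not_both_red (l₁ := [v₁]) (l₂ := [v₄, v₅]) h.symm hl hno hx hxl
  have n2 := not_both_red (l₁ := [v₁]) (l₂ := [v₄, v₅]) h.symm hl hno hz hzl
  have hsy := h.symm
  have hne := h.ne
  obtain ⟨hn, hm, hch⟩ := hl
  simp only [List.mem_cons, List.mem_append, List.not_mem_nil, or_false, not_or,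
    forall_eq_or_imp, forall_eq,
    List.nodup_cons, List.isChain_cons_cons, not_false_eq_true, List.nodup_nil, and_true,
    List.IsChain.singleton] at hn hm hch hxl hyl hzl
  have s1 := second_not_twin h (p := v₁) (v₂ := v₂) (x := x) (by grind) (by grind) hx (by grind)
    (by grind) (by grind) (by grind) (by grind)
  have s2 := second_not_twin h (p := v₁) (v₂ := v₂) (x := z) (by grind) (by grind) hz (by grind)
    (by grind) (by grind) (by grind) (by grind)
  have key : (c x v₂ = b ∨ c x v₃ = b) ∨ (c z v₂ = b ∨ c z v₃ = b) := by
    have := h.matching v₃ (by grind) x hx z hz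
    grind
  rcases key with (k | k) | (k | k)
  · refine ⟨[v₂, x, v₁, y, v₅, z], ⟨?_, ?_, ?_⟩, rfl⟩ <;> simp <;> grind
  · refine ⟨[v₃, x, v₁, y, v₅, z], ⟨?_, ?_, ?_⟩, rfl⟩ <;> simp <;> grind
  · refine ⟨[v₂, z, v₅, y, v₁, x], ⟨?_, ?_, ?_⟩, rfl⟩ <;> simp <;> grind
  · refine ⟨[v₃, z, v₅, y, v₁, x], ⟨?_, ?_, ?_⟩, rfl⟩ <;> simp <;> grind

theorem blue_seven_of_six (h : TwinColoring c S r b) {v₁ v₂ v₃ v₄ v₅ v₆ : V}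
    (hl : MonoPath c S r [v₁, v₂, v₃, v₄, v₅, v₆]) (hno : NoPath c S r 7) (hcard : 9 ≤ S.card) :
    ∃ l', MonoPath c S b l' ∧ l'.length = 7 := by
  obtain ⟨x, hx, y, hy, z, hz, hxl, hyl, hzl, hxy, hxz, hyz, a1, a2, a3, a4⟩ :=
    blue_five (p := v₁) (q := v₆) (t := [v₂, v₃, v₄, v₅]) h hl hno hcard
  have e1 := ends_ne (p := v₁) (q := v₆) (t := [v₂, v₃, v₄, v₅]) h.symm hl hno hx hxl
  have e2 := ends_ne (p := v₁) (q := v₆) (t := [v₂, v₃, v₄, v₅]) h.symm hl hno hz hzl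
  have n1 := not_both_red (l₁ := [v₁]) (l₂ := [v₄, v₅, v₆]) h.symm hl hno hx hxl
  have n2 := not_both_red (l₁ := [v₁]) (l₂ := [v₄, v₅, v₆]) h.symm hl hno hz hzl
  have n3 := not_both_red (l₁ := [v₁, v₂, v₃]) (l₂ := [v₆]) h.symm hl hno hx hxl
  have n4 := not_both_red (l₁ := [v₁, v₂, v₃]) (l₂ := [v₆]) h.symm hl hno hz hzl
  have hsy := h.symm
  have hne := h.ne
  obtain ⟨hn, hm, hch⟩ := hl
  simp only [List.mem_cons, List.mem_append, List.not_mem_nil, or_false, not_or,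
    forall_eq_or_imp, forall_eq,
    List.nodup_cons, List.isChain_cons_cons, not_false_eq_true, List.nodup_nil, and_true,
    List.IsChain.singleton] at hn hm hch hxl hyl hzl
  -- the possible twins of an outside vertex `u` on the path are `v₃` and `v₄`; a twin of `v₃` is
  -- joined in blue to `v₅`, and a twin of `v₄` to `v₂`
  have inner : ∀ u ∈ S, u ≠ v₁ → u ≠ v₂ → u ≠ v₃ → u ≠ v₄ → u ≠ v₅ → u ≠ v₆ → c u v₁ ≠ r →
      c u v₆ ≠ r → (c u v₂ = r → c u v₃ ≠ r) → (c u v₄ = r → c u v₅ ≠ r) →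
      (c u v₂ = b ∨ c u v₃ = b ∨ (c u v₃ ≠ r ∧ c u v₅ = b)) ∧
      (c u v₅ = b ∨ c u v₄ = b ∨ (c u v₄ ≠ r ∧ c u v₂ = b)) := by
    intro u hu b1 b2 b3 b4 b5 b6 d1 d2 m1 m2
    have s1 := second_not_twin h (p := v₁) (v₂ := v₂) (x := u) (by grind) (by grind) hu (by grind)
      (by grind) (by grind) (by grind) d1
    have s2 := second_not_twin h (p := v₆) (v₂ := v₅) (x := u) (by grind) (by grind) hu (by grind)
      (by grind) (by grind) (by grind) d2
    have t3 := h.twin u hu v₃ (by grind) v₄ (by grind)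
    have t4 := h.twin u hu v₄ (by grind) v₃ (by grind)
    grind
  have i1 := inner x hx (by grind) (by grind) (by grind) (by grind) (by grind) (by grind)
    e1.1 e1.2 n1 n3
  have i2 := inner z hz (by grind) (by grind) (by grind) (by grind) (by grind) (by grind)
    e2.1 e2.2 n2 n4
  have m3 := h.matching v₃ (by grind) x hx z hz
  have m4 := h.matching v₄ (by grind) x hx z hz
  have key : ∃ u ∈ [v₂, v₃, v₄, v₅], ∃ v ∈ [v₂, v₃, v₄, v₅], u ≠ v ∧ c x u = b ∧ c z v = b := by
    simp only [List.mem_cons, List.not_mem_nil, or_false, exists_eq_or_imp, exists_eq_left]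
    grind
  obtain ⟨u, hu, v, hv, huv, k1, k2⟩ := key
  have hin : ∀ u ∈ [v₂, v₃, v₄, v₅], u ∈ S ∧ u ≠ v₁ ∧ u ≠ v₆ ∧ u ≠ x ∧ u ≠ y ∧ u ≠ z := by
    simp only [List.mem_cons, List.not_mem_nil, or_false, forall_eq_or_imp, forall_eq]
    grind
  have hu' := hin u hu
  have hv' := hin v hv
  refine ⟨[u, x, v₁, y, v₆, z, v], ⟨?_, ?_, ?_⟩, rfl⟩ <;> simp <;> grind


/-- `blue_five` for a path not yet split at its ends. -/
theorem blue_path_five (h : TwinColoring c S r b) {l : List V} (hl : MonoPath c S r l)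
    (hl2 : 2 ≤ l.length) (hno : NoPath c S r (l.length + 1)) (hcard : l.length + 3 ≤ S.card) :
    ∃ l', MonoPath c S b l' ∧ l'.length = 5 := by
  obtain ⟨p, t, q, rfl⟩ := exists_ends hl2
  obtain ⟨x, hx, y, hy, z, hz, hxl, hyl, hzl, hxy, hxz, hyz, a1, a2, a3, a4⟩ :=
    blue_five h hl hno hcard
  obtain ⟨hn, hm, -⟩ := hl
  have hp := hm p (by simp)
  have hq := hm q (by simp)
  have hsy := h.symm
  simp only [List.mem_cons, List.mem_append, List.not_mem_nil, or_false, not_or,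
    List.nodup_cons] at hn hxl hyl hzl
  refine ⟨[x, p, y, q, z], ⟨?_, ?_, ?_⟩, rfl⟩ <;> simp <;> grind

omit [DecidableEq V] in
theorem monoPath_edge {i : K} (h : ∃ u ∈ S, ∃ v ∈ S, u ≠ v ∧ c u v = i) :
    ∃ l, MonoPath c S i l ∧ l.length = 2 := by
  obtain ⟨u, hu, v, hv, huv, h⟩ := h
  exact ⟨[u, v], ⟨by simp [huv], by simp [hu, hv], by simp [h]⟩, rfl⟩

/-- Both colors exclude paths on seven vertices. By symmetry, six vertices in one color would yield
seven in the other, hence five in one color would yield six in the other, so there is no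
monochromatic path on five vertices; this contradicts `blue_five`. -/
theorem no_two_two (h : TwinColoring c S r b) (hcard : 9 ≤ S.card)
    (hr : ∃ u ∈ S, ∃ v ∈ S, u ≠ v ∧ c u v = r) (h1 : NoPath c S r 7) : ¬ NoPath c S b 7 := by
  intro h2
  have six : ∀ r b, TwinColoring c S r b → NoPath c S r 7 → NoPath c S b 7 →
      NoPath c S r 6 := by
    intro r b h h1 h2 l hl hlen
    match l, hlen with
    | [v₁, v₂, v₃, v₄, v₅, v₆], _ =>
      obtain ⟨l', hl', hlen'⟩ := blue_seven_of_six h hl h1 hcard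
      exact h2 l' hl' hlen'
  have h3 := six r b h h1 h2
  have h4 := six b r h.swap h2 h1
  have five : ∀ r b, TwinColoring c S r b → NoPath c S r 6 → NoPath c S b 6 →
      NoPath c S r 5 := by
    intro r b h h1 h2 l hl hlen
    match l, hlen with
    | [v₁, v₂, v₃, v₄, v₅], _ =>
      obtain ⟨l', hl', hlen'⟩ := blue_six_of_five h hl h1 (by omega)
      exact h2 l' hl' hlen'
  have h5 := five r b h h3 h4
  have h6 := five b r h.swap h4 h3
  obtain ⟨l, hl, hlen⟩ := monoPath_edge hr
  obtain ⟨l, hl, g1, g2, g3⟩ := exists_jump (by norm_num) hl hlen h5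
  obtain ⟨l', hl', hlen'⟩ := blue_path_five h hl g1 g3 (by omega)
  exact h6 l' hl' hlen'

/-- The case of two colors up to a twin matching: `2m + n + 3` vertices with `n ≤ m ≤ 2` force a red path
on `2m + 3` or a blue path on `2n + 3` vertices. -/
theorem two_color (h : TwinColoring c S r b) {m n : ℕ} (hnm : n ≤ m) (hm : m ≤ 2)
    (hcard : 2 * m + n + 3 ≤ S.card) (hr : ∃ u ∈ S, ∃ v ∈ S, u ≠ v ∧ c u v = r)
    (h1 : NoPath c S r (2 * m + 3)) : ¬ NoPath c S b (2 * n + 3) := by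
  intro h2
  obtain ⟨l, hl, hlen⟩ := monoPath_edge hr
  obtain ⟨l, hl, g1, g2, g3⟩ := exists_jump (by omega) hl hlen h1
  obtain rfl | rfl | rfl : n = 0 ∨ n = 1 ∨ n = 2 := by omega
  · obtain ⟨l', hl', hlen'⟩ := blue_three h hl g1 g3 (by omega)
    exact h2 l' hl' hlen'
  · have : ∃ l', MonoPath c S b l' ∧ l'.length = 5 := by
      by_cases h3 : l.length + 3 ≤ S.card
      · exact blue_path_five h hl g1 g3 h3
      · obtain rfl | rfl : m = 1 ∨ m = 2 := by omega
        · have h4 : l.length = 4 := by omega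
          match l, h4 with
          | [v₁, v₂, v₃, v₄], _ => exact blue_five_of_four h hl g3 (by omega)
        · have h4 : l.length = 6 := by omega
          match l, h4 with
          | [v₁, v₂, v₃, v₄, v₅, v₆], _ => exact blue_five_of_six h hl g3 (by omega)
    obtain ⟨l', hl', hlen'⟩ := this
    exact h2 l' hl' hlen'
  · obtain rfl : m = 2 := by omega
    exact no_two_two h (by omega) hr h1 h2

/-! ### Lengthening paths through complete bipartite graphs -/

/-- If every vertex of `D` is joined in color `i` to all of `X`, each `d ∈ D` lengthens a path of color
`i` starting in `X` by two vertices, as long as `X` has vertices that are not used: prepend an unused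
vertex of `X` followed by `d`. -/
theorem extend_path (hc : ∀ u v, c u v = c v u) {i : K} {X : Finset V} (hX : X ⊆ S)
    {x₀ : V} {t : List V} (hx₀ : x₀ ∈ X) (hl : MonoPath c S i (x₀ :: t)) (D : Finset V)
    (hD : D ⊆ S) (hDX : Disjoint D X) (hDl : ∀ d ∈ D, d ∉ x₀ :: t)
    (hi : ∀ d ∈ D, ∀ x ∈ X, c d x = i)
    (hcard : ((x₀ :: t).toFinset ∩ X).card + D.card ≤ X.card) :
    ∃ l, MonoPath c S i l ∧ l.length = t.length + 1 + 2 * D.card := by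
  suffices H : ∃ y s, y ∈ X ∧ MonoPath c S i (y :: s) ∧
      s.length = t.length + 2 * D.card ∧ (∀ z ∈ y :: s, z ∈ x₀ :: t ∨ z ∈ X ∨ z ∈ D) ∧
      ((y :: s).toFinset ∩ X).card ≤ ((x₀ :: t).toFinset ∩ X).card + D.card by
    obtain ⟨y, s, -, h, h', -⟩ := H
    exact ⟨y :: s, h, by rw [List.length_cons]; omega⟩
  induction D using Finset.induction_on with
  | empty => exact ⟨x₀, t, hx₀, hl, by simp, by simp +contextual, by simp⟩
  | @insert d D hd ih =>
    rw [Finset.card_insert_of_notMem hd] at hcard ⊢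
    rw [Finset.disjoint_insert_left] at hDX
    obtain ⟨y, s, hy, hp, hlen, hmem, hX'⟩ := ih (fun e he => hD (Finset.mem_insert_of_mem he))
      hDX.2 (fun e he => hDl e (Finset.mem_insert_of_mem he))
      (fun e he => hi e (Finset.mem_insert_of_mem he)) (by omega)
    -- some vertex of `X` is not yet used
    obtain ⟨z, hz, hzs⟩ : ∃ z ∈ X, z ∉ y :: s := by
      by_contra! hcon
      have : X ⊆ (y :: s).toFinset ∩ X := fun z hz => by
        simpa [hz] using hcon z hz
      have := Finset.card_le_card this
      omega
    have hdX : d ∉ X := hDX.1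
    have hdS : d ∈ S := hD (Finset.mem_insert_self d D)
    have hds : d ∉ y :: s := by
      intro h
      rcases hmem d h with h | h | h
      · exact hDl d (Finset.mem_insert_self d D) h
      · exact hdX h
      · exact hd h
    have hdi := hi d (Finset.mem_insert_self d D)
    have hzd : z ≠ d := by rintro rfl; exact hdX hz
    refine ⟨z, d :: y :: s, hz, ⟨?_, ?_, ?_⟩, ?_, ?_, ?_⟩
    · rw [List.nodup_cons, List.nodup_cons]
      refine ⟨?_, hds, hp.1⟩
      rw [List.mem_cons]
      exact not_or.2 ⟨hzd, hzs⟩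
    · intro w hw
      rcases List.mem_cons.1 hw with rfl | hw
      · exact hX hz
      rcases List.mem_cons.1 hw with rfl | hw
      · exact hdS
      · exact hp.2.1 w hw
    · rw [List.isChain_cons_cons, List.isChain_cons_cons]
      exact ⟨by rw [hc]; exact hdi z hz, hdi y hy, hp.2.2⟩
    · simp only [List.length_cons]; omega
    · intro w hw
      rcases List.mem_cons.1 hw with rfl | hw
      · exact .inr (.inl hz)
      rcases List.mem_cons.1 hw with rfl | hw
      · exact .inr (.inr (Finset.mem_insert_self _ D))
      · rcases hmem w hw with h | h | h
        · exact .inl h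
        · exact .inr (.inl h)
        · exact .inr (.inr (Finset.mem_insert_of_mem h))
    · have : (z :: d :: y :: s).toFinset ∩ X ⊆ insert z ((y :: s).toFinset ∩ X) := by
        intro w hw
        simp only [List.toFinset_cons, Finset.mem_inter, Finset.mem_insert] at hw ⊢
        grind
      have := (Finset.card_le_card this).trans (Finset.card_insert_le _ _)
      omega

theorem bipartite_path (hc : ∀ u v, c u v = c v u) {i : K} {n : ℕ} {X Y : Finset V} (hX : X ⊆ S)
    (hY : Y ⊆ S) (hYX : Disjoint Y X) (hi : ∀ y ∈ Y, ∀ x ∈ X, c y x = i)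
    (h1 : n + 2 ≤ X.card) (h2 : n + 1 ≤ Y.card) :
    ∃ l, MonoPath c S i l ∧ l.length = 2 * n + 3 := by
  obtain ⟨D, hD, hDc⟩ := Finset.exists_subset_card_eq h2
  obtain ⟨x₀, hx₀⟩ : X.Nonempty := Finset.card_pos.1 (by omega)
  have hDX : Disjoint D X := Finset.disjoint_of_subset_left hD hYX
  obtain ⟨l, hl, hlen⟩ := extend_path (t := []) hc hX hx₀
    ⟨by simp, by simpa using hX hx₀, by simp⟩ D (hD.trans hY) hDX
    (by
      intro d hd hd'
      obtain rfl := List.mem_singleton.1 hd'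
      exact Finset.disjoint_left.1 hDX hd hx₀)
    (fun d hd => hi d (hD hd))
    (by
      have := Finset.card_le_card (Finset.inter_subset_left (s₁ := [x₀].toFinset) (s₂ := X))
      simp at this ⊢
      omega)
  exact ⟨l, hl, by simp at hlen; omega⟩

variable [DecidableEq K]

/-! ### Minimal counterexamples to the weighted statement -/

/-- The vertices outside `X` that send color `i` to `x₀`; for a module `X` containing `x₀` they send
color `i` to all of `X`. -/
def outside (c : V → V → K) (S X : Finset V) (x₀ : V) (i : K) : Finset V :=
  {u ∈ S \ X | c u x₀ = i}

theorem mem_outside {X : Finset V} {x₀ u : V} {i : K} :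
    u ∈ outside c S X x₀ i ↔ (u ∈ S ∧ u ∉ X) ∧ c u x₀ = i := by
  simp [outside]

variable [Fintype K]

/-- The weighted Ramsey property of `S`: if color `i` has weight `w i ≤ m` and `S` has at least
`∑ w i + m + 3` vertices, then for some `i` there is a path of color `i` on `2 w i + 3` vertices. -/
def Good (c : V → V → K) (m : ℕ) (S : Finset V) : Prop :=
  ∀ w : K → ℕ, (∀ i, w i ≤ m) → ∑ i, w i + m + 3 ≤ S.card →
    ∃ i l, MonoPath c S i l ∧ l.length = 2 * w i + 3

/-- A counterexample to `Good` on a Gallai-colored set `S` all of whose proper subsets satisfy `Good`. -/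
structure MinimalBad (c : V → V → K) (S : Finset V) (w : K → ℕ) (m : ℕ) : Prop where
  symm : ∀ u v, c u v = c v u
  gallai : GallaiOn c S
  le : ∀ i, w i ≤ m
  card : ∑ i, w i + m + 3 ≤ S.card
  noPath : ∀ i, NoPath c S i (2 * w i + 3)
  good : ∀ X, X ⊂ S → Good c m X

variable {w : K → ℕ} {m : ℕ}

omit [DecidableEq V] [DecidableEq K] in
theorem MinimalBad.card' (H : MinimalBad c S w m) (i : K) : 2 * w i + 3 ≤ S.card := by
  have h1 := Finset.single_le_sum (f := w) (fun _ _ => Nat.zero_le _) (Finset.mem_univ i)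
  have h2 := H.le i
  have h3 := H.card
  omega

/-- In a minimal counterexample, a proper module `X` has more than `w i` outside neighbors in some color
`i` and at most `w i + 1` vertices. If each color had at most `w i` outside neighbors `D i`, lowering
each weight by `|D i|` would keep the hypothesis valid on `X`, and the path found there would be
lengthened by `2 |D i|` vertices through `D i`. The bound on `X` is `bipartite_path`. -/
theorem MinimalBad.module (H : MinimalBad c S w m) {X : Finset V} (hX : X ⊂ S) {x₀ : V}
    (hmod : ∀ u ∈ S, u ∉ X → ∀ x ∈ X, c u x = c u x₀) :
    ∃ i, w i + 1 ≤ (outside c S X x₀ i).card ∧ X.card ≤ w i + 1 := by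
  have sub : ∀ i, outside c S X x₀ i ⊆ S := fun i u hu => (mem_outside.1 hu).1.1
  have dis : ∀ i, Disjoint (outside c S X x₀ i) X := fun i =>
    Finset.disjoint_left.2 fun u hu => (mem_outside.1 hu).1.2
  have col : ∀ i, ∀ u ∈ outside c S X x₀ i, ∀ x ∈ X, c u x = i := by
    intro i u hu x hx
    obtain ⟨⟨h1, h2⟩, h3⟩ := mem_outside.1 hu
    rw [hmod u h1 h2 x hx, h3]
  by_contra! hcon
  have hd : ∀ i, (outside c S X x₀ i).card ≤ w i := by
    intro i
    by_contra! h
    obtain ⟨l, hl, hlen⟩ :=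
      bipartite_path H.symm hX.1 (sub i) (dis i) (col i) (hcon i h) h
    exact H.noPath i l hl hlen
  have hsum : ∑ i, (outside c S X x₀ i).card = (S \ X).card :=
    (Finset.card_eq_sum_card_fiberwise (f := fun u => c u x₀) (s := S \ X) (t := Finset.univ)
      (fun _ _ => Finset.mem_coe.2 (Finset.mem_univ _))).symm
  have hw : ∑ i, (w i - (outside c S X x₀ i).card) + (S \ X).card = ∑ i, w i := by
    rw [← hsum, ← Finset.sum_add_distrib]
    exact Finset.sum_congr rfl fun i _ => Nat.sub_add_cancel (hd i)
  have hXS := Finset.card_sdiff_add_card_eq_card hX.1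
  have hcard := H.card
  obtain ⟨i, l, hl, hlen⟩ := H.good X hX (fun i => w i - (outside c S X x₀ i).card)
    (fun i => (Nat.sub_le _ _).trans (H.le i)) (by omega)
  have h1 := Finset.single_le_sum (f := fun i => w i - (outside c S X x₀ i).card)
    (fun _ _ => Nat.zero_le _) (Finset.mem_univ i)
  have h2 := H.le i
  have h3 := hd i
  match l, hlen with
  | y :: t, hlen =>
    rw [List.length_cons] at hlen
    obtain ⟨l', hl', hlen'⟩ := extend_path H.symm hX.1 (hl.2.1 y (by simp))
      ⟨hl.1, fun x hx => hX.1 (hl.2.1 x hx), hl.2.2⟩ (outside c S X x₀ i) (sub i) (dis i)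
      (fun d hd h => Finset.disjoint_left.1 (dis i) hd (hl.2.1 d h)) (col i)
      (by
        have a1 := Finset.card_le_card
          (Finset.inter_subset_left (s₁ := (y :: t).toFinset) (s₂ := X))
        have a2 := List.toFinset_card_le (y :: t)
        rw [List.length_cons] at a2
        omega)
    exact H.noPath i l' hl' (by omega)

/-- No set of edges between two complementary parts is monochromatic; equivalently, the non-`j` edges
always connect `S`. The larger part is a module and `MinimalBad.module` bounds it by `w i + 1`. -/
theorem MinimalBad.no_cut (H : MinimalBad c S w m) {A : Finset V} (hA : A ⊂ S)
    (hne : A.Nonempty) {j : K} (hj : ∀ u ∈ A, ∀ v ∈ S, v ∉ A → c u v = j) : False := by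
  have key : ∀ X : Finset V, X ⊂ S → X.Nonempty → (S \ X).card ≤ X.card →
      (∀ u ∈ S, u ∉ X → ∀ x ∈ X, c u x = j) → False := by
    rintro X hX ⟨x₀, hx₀⟩ hle hcol
    obtain ⟨i, h1, h2⟩ := H.module (x₀ := x₀) hX fun u hu huX x hx => by
      rw [hcol u hu huX x hx, hcol u hu huX x₀ hx₀]
    have h3 : (outside c S X x₀ i).card ≤ (S \ X).card := Finset.card_filter_le _ _
    have h4 := Finset.card_sdiff_add_card_eq_card hX.1
    have h5 := H.card' i
    omega
  rcases le_total (S \ A).card A.card with h | h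
  · exact key A hA hne h fun u hu huA x hx => by rw [H.symm, hj x hx u hu huA]
  · have hs : S \ (S \ A) = A := Finset.sdiff_sdiff_eq_self hA.1
    refine key (S \ A) ?_ ?_ (by rw [hs]; exact h) ?_
    · refine Finset.ssubset_iff_subset_ne.2 ⟨Finset.sdiff_subset, fun h => ?_⟩
      rw [h, Finset.sdiff_self] at hs
      exact hne.ne_empty hs.symm
    · exact Finset.sdiff_nonempty.2 hA.2
    · intro u hu hu' x hx
      rw [Finset.mem_sdiff] at hx
      exact hj u (by simpa [hu] using hu') x hx.1 hx.2

open Classical in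
/-- The component of `x` in the graph on `S` formed by the colors other than `r` and `b`. -/
noncomputable def linkClass (c : V → V → K) (S : Finset V) (r b : K) (x : V) : Finset V :=
  {y ∈ S | Linked c S r b x y}

omit [DecidableEq V] [DecidableEq K] [Fintype K] in
theorem mem_linkClass {x y : V} : y ∈ linkClass c S r b x ↔ y ∈ S ∧ Linked c S r b x y := by
  simp [linkClass]

/-- Components have at most two vertices. By `MinimalBad.module` such a module `X` has at most `w i + 1`
vertices for a color `i` in which it has more than `w i` outside neighbors `D`. If `|X| = w i + 1`,
the complete bipartite graph between `X` and `D` contains the path of color `i` outright when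
`|D| > w i + 1`, and otherwise together with an edge of color `i` leaving `X ∪ D`. Hence
`|X| ≤ w i ≤ 2`. -/
theorem MinimalBad.class_card (H : MinimalBad c S w m) (hm : m ≤ 2) {x : V} (hx : x ∈ S)
    (hne : linkClass c S r b x ≠ S) : (linkClass c S r b x).card ≤ 2 := by
  set X := linkClass c S r b x with hXdef
  have hXS : X ⊆ S := fun y hy => (mem_linkClass.1 hy).1
  have hXss : X ⊂ S := Finset.ssubset_iff_subset_ne.2 ⟨hXS, hne⟩
  have hxX : x ∈ X := mem_linkClass.2 ⟨hx, .refl⟩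
  have hnl : ∀ u ∈ S, u ∉ X → ¬ Linked c S r b x u := fun u hu huX h =>
    huX (mem_linkClass.2 ⟨hu, h⟩)
  have hmod : ∀ u ∈ S, u ∉ X → ∀ y ∈ X, c u y = c u x := by
    intro u hu huX y hy
    rw [H.symm u y, H.symm u x]
    exact (color_eq_of_linked H.gallai hx hu (mem_linkClass.1 hy).2 (hnl u hu huX)).symm
  obtain ⟨i, h1, h2⟩ := H.module hXss hmod
  set D := outside c S X x i with hDdef
  have hDS : D ⊆ S := fun u hu => (mem_outside.1 hu).1.1
  have hDX : Disjoint D X := Finset.disjoint_left.2 fun u hu => (mem_outside.1 hu).1.2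
  have hcol : ∀ u ∈ D, ∀ y ∈ X, c u y = i := by
    intro u hu y hy
    obtain ⟨⟨a1, a2⟩, a3⟩ := mem_outside.1 hu
    rw [hmod u a1 a2 y hy, a3]
  have hwi := H.le i
  have hci := H.card' i
  by_contra! h3
  have h4 : X.card = w i + 1 := by omega
  have h5 : D.card = w i + 1 := by
    by_contra h5
    obtain ⟨l, hl, hlen⟩ := bipartite_path (n := w i) H.symm hDS hXS hDX.symm
      (fun y hy u hu => by rw [H.symm]; exact hcol u hu y hy) (by omega) (by omega)
    exact H.noPath i l hl hlen
  have hAS : X ∪ D ⊂ S := by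
    refine Finset.ssubset_iff_subset_ne.2 ⟨Finset.union_subset hXS hDS, fun h => ?_⟩
    have := Finset.card_union_le X D
    rw [h] at this
    omega
  -- color `i` leaves `X ∪ D`
  obtain ⟨u, hu, v, hv, hvA, huv⟩ : ∃ u ∈ X ∪ D, ∃ v ∈ S, v ∉ X ∪ D ∧ c u v = i := by
    by_contra! hcon
    have hrb : ∀ u ∈ X ∪ D, ∀ v ∈ S, v ∉ X ∪ D → c u v = r ∨ c u v = b := by
      intro u hu v hv hvA
      simp only [Finset.mem_union, not_or] at hu hvA
      rcases hu with hu | hu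
      · exact color_of_not_linked (hXS hu) hv
          fun h => hnl v hv hvA.1 ((mem_linkClass.1 hu).2.trans h)
      · refine color_of_not_linked (hDS hu) hv fun h => hvA.2 ?_
        obtain ⟨⟨a1, a2⟩, a3⟩ := mem_outside.1 hu
        refine mem_outside.2 ⟨⟨hv, hvA.1⟩, ?_⟩
        rw [← a3]
        exact (color_eq_of_linked H.gallai (hDS hu) hx h
          fun h' => hnl u a1 a2 (h'.symm H.symm)).symm
    have hi : i = r ∨ i = b := by
      obtain ⟨d, hd⟩ : D.Nonempty := Finset.card_pos.1 (by omega)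
      obtain ⟨⟨a1, a2⟩, a3⟩ := mem_outside.1 hd
      rw [← a3, H.symm]
      exact color_of_not_linked hx a1 (hnl d a1 a2)
    rcases hi with hi | hi
    · refine H.no_cut hAS ⟨x, Finset.mem_union_left D hxX⟩ (j := b) fun u hu v hv hvA => ?_
      have := hrb u hu v hv hvA
      have := hcon u hu v hv hvA
      grind
    · refine H.no_cut hAS ⟨x, Finset.mem_union_left D hxX⟩ (j := r) fun u hu v hv hvA => ?_
      have := hrb u hu v hv hvA
      have := hcon u hu v hv hvA
      grind
  simp only [Finset.mem_union, not_or] at hu hvA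
  have huD : u ∈ D := by
    refine hu.resolve_left fun huX => hvA.2 (mem_outside.2 ⟨⟨hv, hvA.1⟩, ?_⟩)
    rw [← hmod v hv hvA.1 u huX, H.symm, huv]
  have huX : u ∉ X := Finset.disjoint_left.1 hDX huD
  have hxu : x ≠ u := by rintro rfl; exact huX hxX
  have hxv : x ≠ v := by rintro rfl; exact hvA.1 hxX
  have huv' : u ≠ v := by rintro rfl; exact hvA.2 huD
  obtain ⟨l, hl, hlen⟩ := extend_path (i := i) (t := [u, v]) H.symm hXS hxX
    ⟨by simp [hxu, hxv, huv'], by simp [hx, hDS huD, hv],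
      by simp [huv, H.symm x u, hcol u huD x hxX]⟩
    (D.erase u) ((Finset.erase_subset u D).trans hDS)
    (Finset.disjoint_of_subset_left (Finset.erase_subset u D) hDX)
    (by
      intro d hd hd'
      rw [Finset.mem_erase] at hd
      simp only [List.mem_cons, List.not_mem_nil, or_false] at hd'
      rcases hd' with rfl | rfl | rfl
      · exact Finset.disjoint_left.1 hDX hd.2 hxX
      · exact hd.1 rfl
      · exact hvA.2 hd.2)
    (fun d hd => hcol d (Finset.mem_of_mem_erase hd))
    (by
      have e : [x, u, v].toFinset ∩ X = {x} := by
        ext z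
        simp only [List.toFinset_cons, List.toFinset_nil, Finset.mem_inter, Finset.mem_insert,
          Finset.notMem_empty, or_false, Finset.mem_singleton]
        constructor
        · rintro ⟨rfl | rfl | rfl, hz⟩
          · rfl
          · exact absurd hz huX
          · exact absurd hz hvA.1
        · rintro rfl
          exact ⟨.inl rfl, hxX⟩
      rw [e, Finset.card_singleton, Finset.card_erase_of_mem huD]
      omega)
  refine H.noPath i l hl ?_
  rw [hlen, Finset.card_erase_of_mem huD]
  simp only [List.length_cons, List.length_nil]
  omega

/-- Components of size at most two turn the coloring into a `TwinColoring`, and `two_color` applies. -/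
theorem MinimalBad.false (H : MinimalBad c S w m) (hm : m ≤ 2) : False := by
  have hcard := H.card
  obtain ⟨r, b, p, hp, q, hq, hpq⟩ := exists_not_linked H.symm S H.gallai (by omega)
  have hcls : ∀ x ∈ S, (linkClass c S r b x).card ≤ 2 := by
    intro x hx
    refine H.class_card hm hx fun h => hpq ?_
    have h1 := (mem_linkClass.1 (h.symm.subset hp)).2
    have h2 := (mem_linkClass.1 (h.symm.subset hq)).2
    exact (h1.symm H.symm).trans h2
  have hPS : linkClass c S r b p ⊂ S := by
    refine Finset.ssubset_iff_subset_ne.2 ⟨fun y hy => (mem_linkClass.1 hy).1, fun h => hpq ?_⟩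
    exact (mem_linkClass.1 (h.symm.subset hq)).2
  have hpP : p ∈ linkClass c S r b p := mem_linkClass.2 ⟨hp, .refl⟩
  have hrb : ∀ u ∈ linkClass c S r b p, ∀ v ∈ S, v ∉ linkClass c S r b p →
      c u v = r ∨ c u v = b := by
    intro u hu v hv hvP
    obtain ⟨hu1, hu2⟩ := mem_linkClass.1 hu
    exact color_of_not_linked hu1 hv fun h => hvP (mem_linkClass.2 ⟨hv, hu2.trans h⟩)
  -- both colors occur between the class of `p` and its complement
  have hocc : ∀ i, (i = r ∨ i = b) → ∃ u ∈ S, ∃ v ∈ S, u ≠ v ∧ c u v = i := by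
    intro i hi
    by_contra! hcon
    have hcon' : ∀ u ∈ linkClass c S r b p, ∀ v ∈ S, v ∉ linkClass c S r b p → c u v ≠ i := by
      intro u hu v hv hvP
      refine hcon u (mem_linkClass.1 hu).1 v hv ?_
      rintro rfl
      exact hvP hu
    rcases hi with hi | hi
    · refine H.no_cut hPS ⟨p, hpP⟩ (j := b) fun u hu v hv hvP => ?_
      have := hrb u hu v hv hvP
      have := hcon' u hu v hv hvP
      grind
    · refine H.no_cut hPS ⟨p, hpP⟩ (j := r) fun u hu v hv hvP => ?_
      have := hrb u hu v hv hvP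
      have := hcon' u hu v hv hvP
      grind
  have hmat : ∀ u ∈ S, ∀ v ∈ S, ∀ w ∈ S, v ≠ u → w ≠ u → c u v ≠ r → c u v ≠ b →
      c u w ≠ r → c u w ≠ b → v = w := by
    intro u hu v hv w hw hvu hwu a1 a2 a3 a4
    by_contra hvw
    have hsub : ({u, v, w} : Finset V) ⊆ linkClass c S r b u := by
      intro z hz
      simp only [Finset.mem_insert, Finset.mem_singleton] at hz
      rcases hz with rfl | rfl | rfl
      · exact mem_linkClass.2 ⟨hu, .refl⟩
      · exact mem_linkClass.2 ⟨hv, .single ⟨hu, hv, hvu.symm, a1, a2⟩⟩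
      · exact mem_linkClass.2 ⟨hw, .single ⟨hu, hw, hwu.symm, a3, a4⟩⟩
    have h1 := Finset.card_le_card hsub
    rw [Finset.card_eq_three.2 ⟨u, v, w, hvu.symm, hwu.symm, hvw, rfl⟩] at h1
    have h2 := hcls u hu
    omega
  have hne : r ≠ b := by
    rintro rfl
    exact H.no_cut hPS ⟨p, hpP⟩ (j := r) fun u hu v hv hvP => by
      simpa using hrb u hu v hv hvP
  have T : TwinColoring c S r b := by
    refine ⟨H.symm, hne, hmat, ?_⟩
    intro u hu v hv x hx huv hux hvx a1 a2
    have b1 := hmat u hu v hv x hx huv.symm hux.symm a1 a2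
    have b2 := hmat v hv u hu x hx huv hvx.symm
    have b3 := H.gallai u hu v hv x hx huv hvx hux
    have b4 := H.symm u v
    grind
  have hsum : w r + w b ≤ ∑ i, w i := by
    rw [← Finset.sum_pair hne]
    exact Finset.sum_le_sum_of_subset (Finset.subset_univ _)
  have h1 := H.le r
  have h2 := H.le b
  rcases le_total (w b) (w r) with h | h
  · exact two_color T h (by omega) (by omega) (hocc r (.inl rfl)) (H.noPath r) (H.noPath b)
  · exact two_color T.swap h (by omega) (by omega) (hocc b (.inr rfl)) (H.noPath b) (H.noPath r)

theorem good_of_gallai (hc : ∀ u v, c u v = c v u) (hm : m ≤ 2) (S : Finset V)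
    (hG : GallaiOn c S) : Good c m S := by
  induction S using Finset.strongInduction with
  | H S ih =>
    intro w hw hcard
    by_contra! hcon
    exact MinimalBad.false (w := w) (m := m) ⟨hc, hG, hw, hcard, fun i l hl => hcon i l hl,
      fun X hX => ih X hX fun x hx y hy z hz => hG x (hX.1 hx) y (hX.1 hy) z (hX.1 hz)⟩ hm

end

/-! ### The two bounds for the path on seven vertices -/

theorem gallaiRamsey_upper (k : ℕ) :
    GallaiRamseyProp (fun _ : Fin k =>
      (⟨7, SimpleGraph.pathGraph 7⟩ : Σ V : ℕ, SimpleGraph (Fin V))) (2 * k + 5) := by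
  intro c hG
  obtain ⟨i, l, ⟨hn, -, hch⟩, hlen⟩ := good_of_gallai (c := fun u v => c s(u, v)) (m := 2)
    (fun u v => by rw [Sym2.eq_swap]) le_rfl Finset.univ
    (fun x _ y _ z _ h1 h2 h3 => hG x y z h1 h2 h3) (fun _ => 2) (fun _ => le_rfl)
    (by simp; omega)
  refine ⟨i, fun j => l[j.val]'(by have := j.2; simp only at this; omega), ?_, ?_⟩
  · intro a d h
    exact Fin.ext ((List.Nodup.getElem_inj_iff hn).1 h)
  · intro u v huv
    rw [List.isChain_iff_getElem] at hch
    rcases SimpleGraph.pathGraph_adj.1 huv with h | h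
    · have := hch u.val (by have := v.2; simp only at this; omega)
      simpa only [h] using this
    · have := hch v.val (by have := u.2; simp only at this; omega)
      rw [Sym2.eq_swap]
      simpa only [h] using this

/-- Vertices `0, …, 5` have level `0`, and the pair `2j + 4, 2j + 5` has level `j`; an edge gets the
larger level of its ends. In color `0` only six vertices are available, and in color `j ≥ 1` two
vertices meet all edges, while a path on seven vertices has three disjoint edges. -/
theorem gallaiRamsey_lower (k N : ℕ) (hk : 1 ≤ k) (hN : N < 2 * k + 5) :
    ¬ GallaiRamseyProp (fun _ : Fin k =>
      (⟨7, SimpleGraph.pathGraph 7⟩ : Σ V : ℕ, SimpleGraph (Fin V))) N := by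
  intro h
  have hlev : ∀ t : Fin N, (t.val - 4) / 2 < k := fun t => by omega
  let c : Sym2 (Fin N) → Fin k := fun e =>
    ⟨(e.sup.val - 4) / 2, hlev _⟩
  have hcs : ∀ x y : Fin N, (c s(x, y)).val = (max x.val y.val - 4) / 2 := by
    intro x y
    simp [c]
  obtain ⟨i, f, hf, hadj⟩ := h c (by
    intro x y z _ _ _
    simp only [Fin.ext_iff, hcs]
    omega)
  change Fin 7 → Fin N at f
  have hne : ∀ a d : Fin 7, a ≠ d → (f a).val ≠ (f d).val := fun a d had h =>
    had (hf (Fin.ext h))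
  have he : ∀ a d : Fin 7, a.val + 1 = d.val → (max (f a).val (f d).val - 4) / 2 = i.val := by
    intro a d had
    rw [← hcs, hadj a d (SimpleGraph.pathGraph_adj.2 (.inl had))]
  by_cases hi : i.val = 0
  · have hlt : ∀ a : Fin 7, (f a).val < 6 := by
      intro a
      by_cases ha : a.val = 6
      · have := he ⟨5, by norm_num⟩ a (by simp [ha])
        omega
      · have := he a ⟨a.val + 1, by omega⟩ rfl
        omega
    have := Fintype.card_le_of_injective (fun a : Fin 7 => (⟨(f a).val, hlt a⟩ : Fin 6))
      (fun a d had => hf (Fin.ext (by simpa using had)))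
    simp at this
  · -- each edge of color `i` meets the pair `2 i + 4, 2 i + 5`
    have hp : ∀ a d : Fin 7, a.val + 1 = d.val →
        (f a).val = 2 * i.val + 4 ∨ (f a).val = 2 * i.val + 5 ∨
        (f d).val = 2 * i.val + 4 ∨ (f d).val = 2 * i.val + 5 := by
      intro a d had
      have := he a d had
      omega
    have n1 := hne 0 2 (by decide)
    have n2 := hne 0 3 (by decide)
    have n3 := hne 0 4 (by decide)
    have n4 := hne 0 5 (by decide)
    have n5 := hne 1 2 (by decide)
    have n6 := hne 1 3 (by decide)
    have n7 := hne 1 4 (by decide)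
    have n8 := hne 1 5 (by decide)
    have n9 := hne 2 4 (by decide)
    have n10 := hne 2 5 (by decide)
    have n11 := hne 3 4 (by decide)
    have n12 := hne 3 5 (by decide)
    clear he hne
    rcases hp 0 1 rfl with e1 | e1 | e1 | e1 <;> rcases hp 2 3 rfl with e2 | e2 | e2 | e2 <;>
      rcases hp 4 5 rfl with e3 | e3 | e3 | e3 <;> omega

/-- GR_k(P₇) = 2k + 5. -/
theorem stmt_9 (k : ℕ) (hk : 1 ≤ k) :
    IsLeast {N | 0 < N ∧
      GallaiRamseyProp (fun _ : Fin k => (⟨7, SimpleGraph.pathGraph 7⟩ : Σ V : ℕ, SimpleGraph (Fin V))) N} (2 * k + 5) := by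
  refine ⟨⟨by omega, gallaiRamsey_upper k⟩, ?_⟩
  rintro N ⟨-, hN⟩
  by_contra! h
  exact gallaiRamsey_lower k N hk h hN
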